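/- Let N ≥ 2 be an integer, 0 < R₁ < R₂, and let Q : [R₁,R₂] → ℝ be continuous with ∫_{R₁}^{R₂} r^{N−1} Q(r) dr < 0 and such that Q(r₀) > 0 for some r₀ ∈ (R₁,R₂). Let g satisfy (g1), be regularly oscillating at zero, and satisfy lim_{s→0⁺} g(s)/s = 0 and 0 < liminf_{s→+∞} g(s)/s ≤ limsup_{s→+∞} g(s)/s < +∞. Then there exists ν* > 0 such that for every ν > ν* there exists a C² function w : [R₁,R₂] → ℝ with w(r) > 0 for all r ∈ [R₁,R₂], w''(r) + ((N−1)/r) w'(r) + ν Q(r) g(w(r)) = 0 for all r ∈ [R₁,R₂], and w'(R₁) = w'(R₂) = 0; that is, the Neumann problem −Δu = ν Q(‖x‖) g(u) on the annulus {x ∈ ℝᴺ : R₁ < ‖x‖ < R₂} has at least one positive radially symmetric solution u(x) = w(‖x‖) for each ν > ν*. -/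

import Mathlib

open MeasureTheory Set Filter

/-- The Neumann problem for the radial equation
`w'' + ((N−1)/r) w' + Q(r) g(w) = 0` on `[R₁,R₂]` has a positive `C²` solution,
i.e. the Neumann problem `−Δu = Q(‖x‖) g(u)` on the annulus has a positive
radially symmetric solution `u(x) = w(‖x‖)`. -/
def RadialNeumannPosSol (N : ℕ) (R₁ R₂ : ℝ) (Q g : ℝ → ℝ) : Prop :=
  ∃ w w' w'' : ℝ → ℝ,
    (∀ r ∈ Icc R₁ R₂, HasDerivWithinAt w (w' r) (Icc R₁ R₂) r) ∧
    (∀ r ∈ Icc R₁ R₂, HasDerivWithinAt w' (w'' r) (Icc R₁ R₂) r) ∧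
    ContinuousOn w'' (Icc R₁ R₂) ∧
    (∀ r ∈ Icc R₁ R₂, 0 < w r) ∧
    (∀ r ∈ Icc R₁ R₂, w'' r + (((N : ℝ) - 1) / r) * w' r + Q r * g (w r) = 0) ∧
    w' R₁ = 0 ∧ w' R₂ = 0

/-- Condition (q1): there are `m ≥ 1` pairwise disjoint closed intervals in
`[R₁,R₂]` on which `Q ≥ 0` with `max Q > 0`, while `Q ≤ 0` outside them. -/
def CondQ1 (R₁ R₂ : ℝ) (Q : ℝ → ℝ) : Prop :=
  ∃ (m : ℕ) (σ τ : Fin m → ℝ), 0 < m ∧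
    (∀ i, R₁ ≤ σ i ∧ σ i ≤ τ i ∧ τ i ≤ R₂) ∧
    (Pairwise fun i j => Disjoint (Icc (σ i) (τ i)) (Icc (σ j) (τ j))) ∧
    (∀ i, ∀ r ∈ Icc (σ i) (τ i), 0 ≤ Q r) ∧
    (∀ i, ∃ r ∈ Icc (σ i) (τ i), 0 < Q r) ∧
    (∀ r ∈ Icc R₁ R₂ \ ⋃ i, Icc (σ i) (τ i), Q r ≤ 0)

/-- Condition (g1): `g : [0,∞) → [0,∞)` is continuous, `g 0 = 0`, `g > 0` on `(0,∞)`. -/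
def CondG1 (g : ℝ → ℝ) : Prop :=
  ContinuousOn g (Ici (0:ℝ)) ∧ (∀ s : ℝ, 0 ≤ s → 0 ≤ g s) ∧ g 0 = 0 ∧
    ∀ s : ℝ, 0 < s → 0 < g s

/-- `g` is regularly oscillating at zero. -/
def RegOscAtZero (g : ℝ → ℝ) : Prop :=
  ∀ ε : ℝ, 0 < ε → ∃ δ > (0:ℝ), ∃ η > (0:ℝ), ∀ s ω : ℝ,
    0 < s → s < δ → |ω - 1| < η → |g (ω * s) / g s - 1| < ε

/-- `liminf_{s → +∞} g(s)/s`, computed in `EReal`. -/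
noncomputable def GrowthLiminf (g : ℝ → ℝ) : EReal :=
  liminf (fun s : ℝ => ((g s / s : ℝ) : EReal)) atTop

/-- `limsup_{s → +∞} g(s)/s`, computed in `EReal`. -/
noncomputable def GrowthLimsup (g : ℝ → ℝ) : EReal :=
  limsup (fun s : ℝ => ((g s / s : ℝ) : EReal)) atTop

open scoped Topology
open Function (uncurry)

/-!
In terms of the flux `y = r ^ (N - 1) w'` the equation is the planar system `w' = ρ y`,
`y' = -h g(w)` with `ρ = r ^ (1 - N)` and `h = ν r ^ (N - 1) Q`, and one shoots on `c = w(R₁)`,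
starting from zero flux, until the flux at `R₂` vanishes. For small `c` the solution stays close
to `c`; by regular oscillation its flux at `R₂` is then `-g(c) (∫ h + o(1)) > 0`. For large `c` and
large `ν` the solution reaches zero: otherwise, near `r₀`, the quotient `y / w` would solve a
Riccati equation that drives it out of the range to which concavity confines it. A solution that
reaches zero moves on with constant negative flux, so it ends with negative flux, and a solution
with zero flux at `R₂` is positive. As `g` is merely continuous, solutions need not be unique; the
intermediate value theorem is applied to Tonelli approximations, which depend continuously on `c`,
and a limit is extracted by compactness.
-/

section IntegralCurves

variable {E : Type*} [NormedAddCommGroup E] [NormedSpace ℝ E] {a b : ℝ}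

theorem norm_le_norm_mul_exp_of_le {z z' : ℝ → E} {L : ℝ}
    (hz : ∀ t ∈ Icc a b, HasDerivWithinAt z (z' t) (Icc a b) t)
    (hL : ∀ t ∈ Icc a b, ‖z' t‖ ≤ L * ‖z t‖) {s t : ℝ} (hs : s ∈ Icc a b) (ht : t ∈ Icc a b)
    (hst : s ≤ t) : ‖z t‖ ≤ ‖z s‖ * Real.exp (L * (t - s)) := by
  have hsub : Icc s t ⊆ Icc a b := Icc_subset_Icc hs.1 ht.2
  have hmem : ∀ x ∈ Ico s t, x ∈ Icc a b := fun x hx ↦ hsub (Ico_subset_Icc_self hx)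
  rw [← gronwallBound_ε0]
  refine norm_le_gronwallBound_of_norm_deriv_right_le (f' := z')
    (fun x hx ↦ (hz x (hsub hx)).continuousWithinAt.mono hsub) (fun x hx ↦ ?_) le_rfl
    (fun x hx ↦ by simpa only [add_zero] using hL x (hmem x hx)) t (right_mem_Icc.2 hst)
  exact (hz x (hmem x hx)).mono_of_mem_nhdsWithin
    (mem_of_superset (Icc_mem_nhdsGE hx.2) (Icc_subset_Icc (hmem x hx).1 ht.2))

theorem norm_le_norm_mul_exp {z z' : ℝ → E} {L : ℝ}
    (hz : ∀ t ∈ Icc a b, HasDerivWithinAt z (z' t) (Icc a b) t)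
    (hL : ∀ t ∈ Icc a b, ‖z' t‖ ≤ L * ‖z t‖) {s t : ℝ} (hs : s ∈ Icc a b) (ht : t ∈ Icc a b) :
    ‖z t‖ ≤ ‖z s‖ * Real.exp (L * |t - s|) := by
  rcases le_total s t with hst | hts
  · rw [abs_of_nonneg (sub_nonneg.2 hst)]
    exact norm_le_norm_mul_exp_of_le hz hL hs ht hst
  · have hneg : ∀ x ∈ Icc (-b) (-a), -x ∈ Icc a b := fun x hx ↦
      ⟨le_neg.1 hx.2, neg_le.1 hx.1⟩
    have hz_neg : ∀ x ∈ Icc (-b) (-a),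
        HasDerivWithinAt (fun x ↦ z (-x)) (-z' (-x)) (Icc (-b) (-a)) x := fun x hx ↦ by
      simpa only [neg_one_smul] using!
        (hz (-x) (hneg x hx)).scomp x (hasDerivAt_neg x).hasDerivWithinAt hneg
    have hbound := norm_le_norm_mul_exp_of_le hz_neg
      (fun x hx ↦ by simpa only [norm_neg] using hL _ (hneg x hx))
      (s := -s) (t := -t) ⟨neg_le_neg hs.2, neg_le_neg hs.1⟩ ⟨neg_le_neg ht.2, neg_le_neg ht.1⟩
      (neg_le_neg hts)
    rwa [neg_neg, neg_neg, neg_sub_neg, ← abs_of_nonneg (sub_nonneg.2 hts), abs_sub_comm] at hbound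

theorem exists_subseq_tendsto_of_forall_norm_sub_le [FiniteDimensional ℝ E] {w : ℕ → ℝ → E}
    {B : ℝ} (hab : a ≤ b)
    (hw : ∀ n, ∀ s ∈ Icc a b, ∀ t ∈ Icc a b, ‖w n s - w n t‖ ≤ B * |s - t|)
    {K : Set E} (hK : IsCompact K) (hwK : ∀ n, w n a ∈ K) :
    ∃ φ : ℕ → ℕ, StrictMono φ ∧ ∃ γ : ℝ → E, ContinuousOn γ (Icc a b) ∧
      ∀ t ∈ Icc a b, Tendsto (fun n ↦ w (φ n) t) atTop (𝓝 (γ t)) := by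
  have hlip : ∀ n, LipschitzOnWith B.toNNReal (w n) (Icc a b) := fun n ↦
    LipschitzOnWith.of_dist_le_mul fun s hs t ht ↦ by
      rw [dist_eq_norm, Real.dist_eq]
      exact (hw n s hs t ht).trans
        (mul_le_mul_of_nonneg_right (Real.le_coe_toNNReal B) (abs_nonneg _))
  obtain ⟨R, hR⟩ := hK.isBounded.exists_norm_le
  let F : ℕ → BoundedContinuousFunction (Icc a b) E := fun n ↦
    .mkOfCompact ⟨(Icc a b).domRestrict (w n), (hlip n).continuousOn.domRestrict⟩
  have hF_bound : ∀ f : BoundedContinuousFunction (Icc a b) E, ∀ t, f ∈ range F →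
      f t ∈ Metric.closedBall 0 (R + B.toNNReal * (b - a)) := by
    rintro _ t ⟨n, rfl⟩
    have hta := (hlip n).dist_le_mul t t.2 a (left_mem_Icc.2 hab)
    rw [dist_eq_norm, Real.dist_eq, abs_of_nonneg (sub_nonneg.2 t.2.1)] at hta
    rw [mem_closedBall_zero_iff]
    calc ‖w n t‖ ≤ ‖w n a‖ + ‖w n t - w n a‖ := norm_le_norm_add_norm_sub' _ _
      _ ≤ R + B.toNNReal * (b - a) :=
        add_le_add (hR _ (hwK n)) (hta.trans (by gcongr; exact t.2.2))
  have hF_equi : Equicontinuous ((↑) : range F → Icc a b → E) := by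
    refine (LipschitzWith.uniformEquicontinuous _ B.toNNReal ?_).equicontinuous
    rintro ⟨_, n, rfl⟩
    exact lipschitzOnWith_iff_restrict.1 (hlip n)
  obtain ⟨f, -, φ, hφ, hlim⟩ :=
    (BoundedContinuousFunction.arzela_ascoli _ (isCompact_closedBall _ _) _ hF_bound
      hF_equi).tendsto_subseq (fun n ↦ subset_closure (mem_range_self (f := F) n))
  refine ⟨φ, hφ, IccExtend hab f, (f.continuous.Icc_extend').continuousOn, fun t ht ↦ ?_⟩
  rw [IccExtend_of_mem hab f ht]
  exact ((BoundedContinuousFunction.lipschitz_eval_const ⟨t, ht⟩).continuous.tendsto f).comp hlim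

theorem norm_picard_sub_picard_le {f : ℝ → E → E} (hf : Continuous (uncurry f)) {B : ℝ}
    (hB : ∀ t x, ‖f t x‖ ≤ B) {v : ℝ → E} (hv : Continuous v) (x : E) (s t : ℝ) :
    ‖ODE.picard f a x v s - ODE.picard f a x v t‖ ≤ B * |s - t| := by
  have hint : ∀ r, IntervalIntegrable (fun τ ↦ f τ (v τ)) volume a r := fun r ↦
    (hf.comp (continuous_id.prodMk hv)).intervalIntegrable _ _
  rw [ODE.picard_apply, ODE.picard_apply, add_sub_add_left_eq_sub,
    intervalIntegral.integral_interval_sub_left (hint s) (hint t)]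
  exact intervalIntegral.norm_integral_le_of_norm_le_const fun τ _ ↦ hB τ _

theorem exists_subseq_tendsto_isIntegralCurveOn [FiniteDimensional ℝ E] {f : ℝ → E → E}
    (hf : Continuous (uncurry f)) {B : ℝ} (hB : ∀ t x, ‖f t x‖ ≤ B) (hab : a ≤ b)
    {v w : ℕ → ℝ → E} (hv : ∀ n, Continuous (v n))
    (hw : ∀ n, ∀ t ∈ Icc a b, w n t = ODE.picard f a (w n a) (v n) t)
    (hvw : ∀ t ∈ Icc a b, Tendsto (fun n ↦ v n t - w n t) atTop (𝓝 0))
    {K : Set E} (hK : IsCompact K) (hwK : ∀ n, w n a ∈ K) :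
    ∃ φ : ℕ → ℕ, StrictMono φ ∧ ∃ γ : ℝ → E, IsIntegralCurveOn γ f (Icc a b) ∧
      ∀ t ∈ Icc a b, Tendsto (fun n ↦ w (φ n) t) atTop (𝓝 (γ t)) := by
  have ha : a ∈ Icc a b := left_mem_Icc.2 hab
  obtain ⟨φ, hφ, γ, hγ, hlim⟩ := exists_subseq_tendsto_of_forall_norm_sub_le (w := w) hab
    (fun n s hs t ht ↦ by
      rw [hw n s hs, hw n t ht]
      exact norm_picard_sub_picard_le hf hB (hv n) _ s t) hK hwK
  have hlim_v : ∀ t ∈ Icc a b, Tendsto (fun n ↦ v (φ n) t) atTop (𝓝 (γ t)) := fun t ht ↦ by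
    simpa only [Function.comp_def, sub_add_cancel, zero_add] using!
      ((hvw t ht).comp hφ.tendsto_atTop).add (hlim t ht)
  have hlim_picard : ∀ t ∈ Icc a b,
      Tendsto (fun n ↦ ODE.picard f a (w (φ n) a) (v (φ n)) t) atTop
        (𝓝 (ODE.picard f a (γ a) γ t)) := fun t ht ↦ by
    refine (hlim a ha).add
      (intervalIntegral.tendsto_integral_filter_of_dominated_convergence (fun _ ↦ B) ?_ ?_ ?_ ?_)
    · exact .of_forall fun n ↦
        (hf.comp (continuous_id.prodMk (hv (φ n)))).aestronglyMeasurable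
    · exact .of_forall fun n ↦ .of_forall fun τ _ ↦ hB τ _
    · exact intervalIntegrable_const
    · refine .of_forall fun τ hτ ↦ ?_
      have hτ' : τ ∈ Icc a b := uIcc_subset_Icc ha ht (uIoc_subset_uIcc hτ)
      exact ((hf.comp (Continuous.prodMk_right τ)).tendsto _).comp (hlim_v τ hτ')
  have hγ_picard : EqOn γ (ODE.picard f a (γ a) γ) (Icc a b) := fun t ht ↦
    tendsto_nhds_unique (hlim t ht) ((hlim_picard t ht).congr fun n ↦ (hw _ t ht).symm)
  refine ⟨φ, hφ, γ, fun t ht ↦ ?_, hlim⟩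
  exact (ODE.hasDerivWithinAt_picard_Icc ha hf.continuousOn hγ (fun _ _ ↦ mem_univ _) (γ a)
    ht).congr hγ_picard (hγ_picard ht)

/-- The `k`-th iterate of the delayed Picard operator `w ↦ picard f a x (w (· - δ))`, where times
before `a` are replaced by `a`. On `[a, a + k δ]` it solves Tonelli's delayed equation
`w' t = f t (w (t - δ))`, `w a = x`. -/
noncomputable def tonelliIterate (f : ℝ → E → E) (a δ : ℝ) : ℕ → E → ℝ → E
  | 0 => fun x _ ↦ x
  | k + 1 => fun x ↦ ODE.picard f a x fun t ↦ tonelliIterate f a δ k x (max a (t - δ))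

theorem continuous_uncurry_tonelliIterate {f : ℝ → E → E} (hf : Continuous (uncurry f))
    (a δ : ℝ) (k : ℕ) : Continuous (uncurry (tonelliIterate f a δ k)) := by
  induction k with
  | zero => exact continuous_fst
  | succ k ih =>
    refine continuous_fst.add (intervalIntegral.continuous_parametric_intervalIntegral_of_continuous
      (f := fun (p : E × ℝ) τ ↦ f τ (tonelliIterate f a δ k p.1 (max a (τ - δ)))) ?_
      continuous_snd)
    exact hf.comp (continuous_snd.prodMk (ih.comp
      (by fun_prop : Continuous fun p : (E × ℝ) × ℝ ↦ (p.1.1, max a (p.2 - δ)))))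

theorem tonelliIterate_succ_eq_self (f : ℝ → E → E) {δ : ℝ} (hδ : 0 ≤ δ) (x : E) (k : ℕ) {t : ℝ}
    (hat : a ≤ t) (ht : t ≤ a + k * δ) :
    tonelliIterate f a δ (k + 1) x t = tonelliIterate f a δ k x t := by
  induction k generalizing t with
  | zero =>
    obtain rfl : t = a := le_antisymm (by simpa using ht) hat
    exact ODE.picard_apply₀
  | succ k ih =>
    refine congrArg (x + ·) (intervalIntegral.integral_congr fun τ hτ ↦ ?_)
    rw [uIcc_of_le hat] at hτ
    push_cast at ht
    have hkδ : 0 ≤ k * δ := by positivity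
    exact congrArg (f τ) (ih (le_max_left _ _) (max_le (by linarith) (by linarith [hτ.2])))

theorem exists_continuous_approx_isIntegralCurveOn {f : ℝ → E → E}
    (hf : Continuous (uncurry f)) {B : ℝ} (hB : ∀ t x, ‖f t x‖ ≤ B) (hab : a ≤ b) {ε : ℝ}
    (hε : 0 < ε) :
    ∃ V W : E → ℝ → E, (∀ x, Continuous (V x)) ∧ Continuous (uncurry W) ∧
      (∀ x, W x a = x) ∧ (∀ x, ∀ t ∈ Icc a b, W x t = ODE.picard f a x (V x) t) ∧
      ∀ x, ∀ t ∈ Icc a b, ‖V x t - W x t‖ ≤ ε := by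
  have hB₀ : 0 ≤ B := (norm_nonneg _).trans (hB 0 0)
  obtain ⟨δ, hδ, hBδ⟩ : ∃ δ > 0, B * δ ≤ ε :=
    ⟨ε / (B + 1), by positivity, by rw [mul_div_assoc', div_le_iff₀ (by positivity)]; nlinarith⟩
  obtain ⟨k, hk⟩ := exists_nat_ge ((b - a) / δ)
  have hbk : b ≤ a + k * δ := by linarith [(div_le_iff₀ hδ).1 hk]
  let W := tonelliIterate f a δ k
  have hWc : Continuous (uncurry W) := continuous_uncurry_tonelliIterate hf a δ k
  let V : E → ℝ → E := fun x t ↦ W x (max a (t - δ))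
  have hV : ∀ x, Continuous (V x) := fun x ↦
    hWc.comp (by fun_prop : Continuous fun t ↦ (x, max a (t - δ)))
  have hW : ∀ x, ∀ t ∈ Icc a b, W x t = ODE.picard f a x (V x) t := fun x t ht ↦
    (tonelliIterate_succ_eq_self f hδ.le x k ht.1 (ht.2.trans hbk)).symm
  refine ⟨V, W, hV, hWc, fun x ↦ ?_, hW, fun x t ht ↦ ?_⟩
  · rw [hW x a (left_mem_Icc.2 hab), ODE.picard_apply₀]
  · have hdelay : max a (t - δ) ∈ Icc a t := ⟨le_max_left _ _, max_le ht.1 (by linarith)⟩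
    have hclose : |max a (t - δ) - t| ≤ δ :=
      abs_le.2 ⟨by linarith [le_max_right a (t - δ)], by linarith [hdelay.2]⟩
    calc ‖W x (max a (t - δ)) - W x t‖
        = ‖ODE.picard f a x (V x) (max a (t - δ)) - ODE.picard f a x (V x) t‖ := by
          rw [hW x _ ⟨hdelay.1, hdelay.2.trans ht.2⟩, hW x t ht]
      _ ≤ B * |max a (t - δ) - t| := norm_picard_sub_picard_le hf hB (hV x) x _ _
      _ ≤ ε := (mul_le_mul_of_nonneg_left hclose hB₀).trans hBδ

theorem eventually_pos_of_forall_isIntegralCurveOn [FiniteDimensional ℝ E] {f : ℝ → E → E}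
    (hf : Continuous (uncurry f)) {B : ℝ} (hB : ∀ t x, ‖f t x‖ ≤ B) (hab : a ≤ b)
    {v w : ℕ → ℝ → E} (hv : ∀ n, Continuous (v n))
    (hw : ∀ n, ∀ t ∈ Icc a b, w n t = ODE.picard f a (w n a) (v n) t)
    (hvw : ∀ t ∈ Icc a b, Tendsto (fun n ↦ v n t - w n t) atTop (𝓝 0))
    {z : E} (hwz : ∀ n, w n a = z) {φ : E → ℝ} (hφ : Continuous φ)
    (hpos : ∀ γ, IsIntegralCurveOn γ f (Icc a b) → γ a = z → 0 < φ (γ b)) :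
    ∀ᶠ n in atTop, 0 < φ (w n b) := by
  by_contra hcon
  obtain ⟨θ, hθ, hneg⟩ := extraction_of_frequently_atTop (not_eventually.1 hcon)
  obtain ⟨ψ, -, γ, hγ, hlim⟩ := exists_subseq_tendsto_isIntegralCurveOn hf hB hab
    (fun n ↦ hv (θ n)) (fun n ↦ hw (θ n)) (fun t ht ↦ (hvw t ht).comp hθ.tendsto_atTop)
    isCompact_singleton (fun n ↦ hwz (θ n))
  have hγa : γ a = z := tendsto_nhds_unique (hlim a (left_mem_Icc.2 hab))
    (by simp only [hwz, tendsto_const_nhds])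
  have hφb := (hφ.tendsto _).comp (hlim b (right_mem_Icc.2 hab))
  exact (hpos γ hγ hγa).not_ge (le_of_tendsto' hφb fun n ↦ not_lt.1 (hneg (ψ n)))

theorem exists_isIntegralCurveOn_eq_zero_of_norm_le [FiniteDimensional ℝ E] {f : ℝ → E → E}
    (hf : Continuous (uncurry f)) {B : ℝ} (hB : ∀ t x, ‖f t x‖ ≤ B) (hab : a ≤ b)
    {K : Set E} (hK : IsCompact K) (hK' : IsPreconnected K) {z₀ z₁ : E} (hz₀ : z₀ ∈ K)
    (hz₁ : z₁ ∈ K) {φ : E → ℝ} (hφ : Continuous φ)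
    (hpos : ∀ γ, IsIntegralCurveOn γ f (Icc a b) → γ a = z₀ → 0 < φ (γ b))
    (hneg : ∀ γ, IsIntegralCurveOn γ f (Icc a b) → γ a = z₁ → φ (γ b) < 0) :
    ∃ γ, IsIntegralCurveOn γ f (Icc a b) ∧ γ a ∈ K ∧ φ (γ b) = 0 := by
  choose V W hV hW_cont hWa hW hVW using fun n : ℕ ↦
    exists_continuous_approx_isIntegralCurveOn hf hB hab (Nat.one_div_pos_of_nat (α := ℝ) (n := n))
  have happrox : ∀ x : ℕ → E, ∀ t ∈ Icc a b,
      Tendsto (fun n ↦ V n (x n) t - W n (x n) t) atTop (𝓝 0) := fun x t ht ↦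
    squeeze_zero_norm (fun n ↦ hVW n (x n) t ht) tendsto_one_div_add_atTop_nhds_zero_nat
  have hpicard : ∀ x : ℕ → E, ∀ n, ∀ t ∈ Icc a b,
      W n (x n) t = ODE.picard f a (W n (x n) a) (V n (x n)) t := fun x n t ht ↦ by
    rw [hWa, hW n _ t ht]
  have hpos' : ∀ᶠ n in atTop, 0 < φ (W n z₀ b) :=
    eventually_pos_of_forall_isIntegralCurveOn hf hB hab (fun n ↦ hV n z₀)
      (hpicard fun _ ↦ z₀) (happrox fun _ ↦ z₀) (fun n ↦ hWa n z₀) hφ hpos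
  have hneg' : ∀ᶠ n in atTop, 0 < -φ (W n z₁ b) :=
    eventually_pos_of_forall_isIntegralCurveOn hf hB hab (fun n ↦ hV n z₁)
      (hpicard fun _ ↦ z₁) (happrox fun _ ↦ z₁) (fun n ↦ hWa n z₁) hφ.neg
      fun γ hγ hγa ↦ neg_pos.2 (hneg γ hγ hγa)
  obtain ⟨n₀, hn₀⟩ := eventually_atTop.1 (hpos'.and hneg')
  have hroot : ∀ n, ∃ x ∈ K, φ (W (n₀ + n) x b) = 0 := fun n ↦ by
    obtain ⟨h₀, h₁⟩ := hn₀ (n₀ + n) (Nat.le_add_right _ _)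
    exact hK'.intermediate_value hz₁ hz₀
      (hφ.comp ((hW_cont _).comp (Continuous.prodMk_left b))).continuousOn
      ⟨(neg_pos.1 h₁).le, h₀.le⟩
  choose x hxK hx using hroot
  have hshift : Tendsto (fun n ↦ n₀ + n) atTop atTop := tendsto_atTop_mono
    (fun n ↦ Nat.le_add_left n n₀) tendsto_id
  obtain ⟨ψ, -, γ, hγ, hlim⟩ := exists_subseq_tendsto_isIntegralCurveOn hf hB hab
    (v := fun n ↦ V (n₀ + n) (x n)) (w := fun n ↦ W (n₀ + n) (x n)) (fun n ↦ hV _ _)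
    (fun n t ht ↦ by rw [hWa, hW _ _ t ht])
    (fun t ht ↦ squeeze_zero_norm (fun n ↦ hVW _ _ t ht)
      (tendsto_one_div_add_atTop_nhds_zero_nat.comp hshift)) hK
    (fun n ↦ by rw [hWa]; exact hxK n)
  refine ⟨γ, hγ, hK.isClosed.mem_of_tendsto (hlim a (left_mem_Icc.2 hab))
    (.of_forall fun n ↦ by rw [hWa]; exact hxK _), ?_⟩
  exact tendsto_nhds_unique ((hφ.tendsto _).comp (hlim b (right_mem_Icc.2 hab)))
    (by simp only [Function.comp_def, hx, tendsto_const_nhds])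

/-- The radial retraction of a normed space onto the closed ball of radius `S` about the origin,
used to truncate vector fields of linear growth. -/
noncomputable def ballRetraction (S : ℝ) (z : E) : E := (S / max S ‖z‖) • z

theorem ballRetraction_of_norm_le {S : ℝ} (hS : 0 < S) {z : E} (hz : ‖z‖ ≤ S) :
    ballRetraction S z = z := by
  rw [ballRetraction, max_eq_left hz, div_self hS.ne', one_smul]

theorem norm_ballRetraction_le {S : ℝ} (hS : 0 < S) (z : E) : ‖ballRetraction S z‖ ≤ min S ‖z‖ := by
  have hmax : 0 < max S ‖z‖ := lt_max_of_lt_left hS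
  rw [ballRetraction, norm_smul, Real.norm_of_nonneg (by positivity), div_mul_eq_mul_div,
    div_le_iff₀ hmax, min_mul_max]

theorem continuous_ballRetraction {S : ℝ} (hS : 0 < S) :
    Continuous (ballRetraction S : E → E) :=
  (continuous_const.div (continuous_const.max continuous_norm)
    fun _ ↦ (lt_max_of_lt_left hS).ne').smul continuous_id

theorem exists_isIntegralCurveOn_eq_zero [FiniteDimensional ℝ E] {f : ℝ → E → E}
    (hab : a ≤ b) (hf : ContinuousOn (uncurry f) (Icc a b ×ˢ univ)) {L : ℝ}
    (hL : ∀ t ∈ Icc a b, ∀ x, ‖f t x‖ ≤ L * ‖x‖)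
    {K : Set E} (hK : IsCompact K) (hK' : IsPreconnected K) {z₀ z₁ : E} (hz₀ : z₀ ∈ K)
    (hz₁ : z₁ ∈ K) {φ : E → ℝ} (hφ : Continuous φ)
    (hpos : ∀ γ, IsIntegralCurveOn γ f (Icc a b) → γ a = z₀ → 0 < φ (γ b))
    (hneg : ∀ γ, IsIntegralCurveOn γ f (Icc a b) → γ a = z₁ → φ (γ b) < 0) :
    ∃ γ, IsIntegralCurveOn γ f (Icc a b) ∧ γ a ∈ K ∧ φ (γ b) = 0 := by
  obtain ⟨M, hM, hKM⟩ := hK.isBounded.exists_pos_norm_le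
  let S := M * Real.exp (|L| * (b - a))
  have hS : 0 < S := by positivity
  let fS : ℝ → E → E := fun t x ↦ f (projIcc a b hab t) (ballRetraction S x)
  have hfS : Continuous (uncurry fS) := hf.comp_continuous
    (((continuous_subtype_val.comp (continuous_projIcc (h := hab))).comp continuous_fst).prodMk
      ((continuous_ballRetraction hS).comp continuous_snd))
    fun p ↦ ⟨Subtype.coe_prop _, mem_univ _⟩
  have hfS_le : ∀ t x, ‖fS t x‖ ≤ |L| * min S ‖x‖ := fun t x ↦
    calc ‖fS t x‖ ≤ L * ‖ballRetraction S x‖ := hL _ (Subtype.coe_prop _) _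
      _ ≤ |L| * min S ‖x‖ :=
        mul_le_mul (le_abs_self L) (norm_ballRetraction_le hS x) (norm_nonneg _) (abs_nonneg L)
  have huntruncate : ∀ γ, IsIntegralCurveOn γ fS (Icc a b) → γ a ∈ K →
      IsIntegralCurveOn γ f (Icc a b) := fun γ hγ hγa t ht ↦ by
    have hγ_le : ‖γ t‖ ≤ S :=
      calc ‖γ t‖ ≤ ‖γ a‖ * Real.exp (|L| * |t - a|) := norm_le_norm_mul_exp hγ
            (fun t _ ↦ (hfS_le t _).trans (by gcongr; exact min_le_right _ _))
            (left_mem_Icc.2 hab) ht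
        _ ≤ M * Real.exp (|L| * (b - a)) := by
          rw [abs_of_nonneg (sub_nonneg.2 ht.1)]
          gcongr
          exacts [hKM _ hγa, ht.2]
    simpa only [fS, projIcc_of_mem hab ht, ballRetraction_of_norm_le hS hγ_le] using hγ t ht
  obtain ⟨γ, hγ, hγa, hγb⟩ := exists_isIntegralCurveOn_eq_zero_of_norm_le hfS (B := |L| * S)
    (fun t x ↦ (hfS_le t x).trans (by gcongr; exact min_le_left _ _)) hab hK hK' hz₀ hz₁ hφ
    (fun γ hγ hγa ↦ hpos γ (huntruncate γ hγ (hγa ▸ hz₀)) hγa)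
    (fun γ hγ hγa ↦ hneg γ (huntruncate γ hγ (hγa ▸ hz₁)) hγa)
  exact ⟨γ, huntruncate γ hγ hγa, hγa, hγb⟩

end IntegralCurves

theorem mul_sub_le_sub_of_le_hasDerivWithinAt {f f' : ℝ → ℝ} {a b C : ℝ} (hab : a ≤ b)
    (hf : ∀ t ∈ Icc a b, HasDerivWithinAt f (f' t) (Icc a b) t) (hC : ∀ t ∈ Icc a b, C ≤ f' t) :
    C * (b - a) ≤ f b - f a := by
  have hmono : MonotoneOn (fun t ↦ f t - C * t) (Icc a b) := by
    have hderiv : ∀ t ∈ Icc a b, HasDerivWithinAt (fun t ↦ f t - C * t) (f' t - C) (Icc a b) t :=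
      fun t ht ↦ (hf t ht).sub <| by
        simpa only [mul_one] using! (hasDerivWithinAt_id t _).const_mul C
    exact monotoneOn_of_hasDerivWithinAt_nonneg (convex_Icc a b)
      (fun t ht ↦ (hderiv t ht).continuousWithinAt)
      (fun t ht ↦ (hderiv t (interior_subset ht)).mono interior_subset)
      (fun t ht ↦ sub_nonneg.2 (hC t (interior_subset ht)))
  have := hmono (left_mem_Icc.2 hab) (right_mem_Icc.2 hab) hab
  linarith

theorem sub_le_mul_sub_of_hasDerivWithinAt_le {f f' : ℝ → ℝ} {a b C : ℝ} (hab : a ≤ b)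
    (hf : ∀ t ∈ Icc a b, HasDerivWithinAt f (f' t) (Icc a b) t) (hC : ∀ t ∈ Icc a b, f' t ≤ C) :
    f b - f a ≤ C * (b - a) := by
  have := mul_sub_le_sub_of_le_hasDerivWithinAt (f := fun t ↦ -f t) hab
    (fun t ht ↦ (hf t ht).neg) (fun t ht ↦ neg_le_neg (hC t ht))
  linarith

/-- The vector field of the planar form `u' = ρ y`, `y' = -h g(u⁺)` of the Sturm–Liouville equation
`(u' / ρ)' + h g(u⁺) = 0`, acting on pairs `(u, y)`. The nonlinearity is evaluated at the positive
part of `u`, so that solutions that are not positive still make sense in the shooting argument. -/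
def fluxField (ρ h g : ℝ → ℝ) (t : ℝ) (z : ℝ × ℝ) : ℝ × ℝ :=
  (ρ t * z.2, -(h t * g (max z.1 0)))

theorem norm_fluxField_le {ρ h g : ℝ → ℝ} {L t : ℝ} (hρ : |ρ t| ≤ L)
    (hg : ∀ s, 0 ≤ s → |h t * g s| ≤ L * s) (z : ℝ × ℝ) : ‖fluxField ρ h g t z‖ ≤ L * ‖z‖ := by
  have hL : 0 ≤ L := (abs_nonneg _).trans hρ
  rw [fluxField, Prod.norm_mk]
  refine max_le ?_ ?_
  · rw [norm_mul]
    exact mul_le_mul hρ (le_max_right _ _) (norm_nonneg _) hL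
  · rw [norm_neg]
    refine (hg _ (le_max_right _ _)).trans (mul_le_mul_of_nonneg_left ?_ hL)
    exact max_le ((le_abs_self _).trans (le_max_left _ _)) (norm_nonneg _)

theorem continuousOn_uncurry_fluxField {ρ h g : ℝ → ℝ} {I : Set ℝ} (hρ : ContinuousOn ρ I)
    (hh : ContinuousOn h I) (hg : ContinuousOn g (Ici 0)) :
    ContinuousOn (uncurry (fluxField ρ h g)) (I ×ˢ univ) := by
  have hfst : MapsTo Prod.fst (I ×ˢ (univ : Set (ℝ × ℝ))) I := fun _ hp ↦ hp.1
  have hg' : ContinuousOn (fun p : ℝ × ℝ × ℝ ↦ g (max p.2.1 0)) (I ×ˢ univ) :=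
    hg.comp (by fun_prop) fun _ _ ↦ mem_Ici.2 (le_max_right _ _)
  exact ((hρ.comp continuousOn_fst hfst).mul (by fun_prop)).prodMk
    ((hh.comp continuousOn_fst hfst).mul hg').neg

/-- The pair `(u, y)` solves on `[a, b]` the equation of the vector field `fluxField ρ h g`, with
vanishing flux `y = u' / ρ` at `a`. -/
structure IsFluxSol (a b : ℝ) (ρ h g u y : ℝ → ℝ) : Prop where
  hasDeriv_fst : ∀ t ∈ Icc a b, HasDerivWithinAt u (ρ t * y t) (Icc a b) t
  hasDeriv_flux : ∀ t ∈ Icc a b, HasDerivWithinAt y (-(h t * g (max (u t) 0))) (Icc a b) t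
  flux_left : y a = 0

namespace IsFluxSol

variable {a b L H : ℝ} {ρ h g u y : ℝ → ℝ}

theorem norm_left (hsol : IsFluxSol a b ρ h g u y) : ‖(u a, y a)‖ = |u a| := by
  rw [hsol.flux_left, Prod.norm_mk, norm_zero, max_eq_left (norm_nonneg _), Real.norm_eq_abs]

theorem norm_le (hsol : IsFluxSol a b ρ h g u y) (hρ : ∀ t ∈ Icc a b, |ρ t| ≤ L)
    (hg : ∀ t ∈ Icc a b, ∀ s, 0 ≤ s → |h t * g s| ≤ L * s) {s t : ℝ} (hs : s ∈ Icc a b)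
    (ht : t ∈ Icc a b) : ‖(u t, y t)‖ ≤ ‖(u s, y s)‖ * Real.exp (L * (b - a)) := by
  have hL : 0 ≤ L := (abs_nonneg _).trans (hρ s hs)
  calc ‖(u t, y t)‖ ≤ ‖(u s, y s)‖ * Real.exp (L * |t - s|) :=
        norm_le_norm_mul_exp (z := fun t ↦ (u t, y t))
          (fun t ht ↦ (hsol.hasDeriv_fst t ht).prodMk (hsol.hasDeriv_flux t ht))
          (fun t ht ↦ norm_fluxField_le (hρ t ht) (hg t ht) (u t, y t)) hs ht
    _ ≤ ‖(u s, y s)‖ * Real.exp (L * (b - a)) := by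
        gcongr
        exact abs_sub_le_of_le_of_le ht.1 ht.2 hs.1 hs.2

theorem eq_add_mul_sub_of_nonpos {P : ℝ → ℝ} (hsol : IsFluxSol a b ρ h g u y)
    (hP : ∀ t ∈ Icc a b, HasDerivWithinAt P (ρ t) (Icc a b) t) (hρ : ∀ t ∈ Icc a b, |ρ t| ≤ L)
    (hg : ∀ t ∈ Icc a b, ∀ s, 0 ≤ s → |h t * g s| ≤ L * s) {p q s t : ℝ}
    (hpq : Icc p q ⊆ Icc a b) (hs : s ∈ Icc p q) (ht : t ∈ Icc p q)
    (hle : ∀ t ∈ Icc p q, u s + y s * (P t - P s) ≤ 0) :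
    u t = u s + y s * (P t - P s) ∧ y t = y s := by
  have hL : 0 ≤ L := (abs_nonneg _).trans (hρ s (hpq hs))
  have hzero := norm_le_norm_mul_exp (L := L)
    (z := fun t ↦ (u t - (u s + y s * (P t - P s)), y t - y s)) (fun t ht ↦
      (((hsol.hasDeriv_fst t (hpq ht)).sub
        ((((hP t (hpq ht)).sub_const (P s)).const_mul (y s)).const_add (u s))).prodMk
        ((hsol.hasDeriv_flux t (hpq ht)).sub_const (y s))).mono hpq)
    (fun t ht ↦ max_le ?_ ?_) hs ht
  · simpa [sub_eq_zero] using hzero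
  · rw [mul_comm (y s), ← mul_sub, norm_mul]
    exact mul_le_mul (hρ t (hpq ht)) (le_max_right _ _) (norm_nonneg _) hL
  · rw [norm_neg]
    refine (hg t (hpq ht) _ (le_max_right _ _)).trans (mul_le_mul_of_nonneg_left ?_ hL)
    refine max_le (le_trans ?_ ((le_abs_self _).trans (le_max_left _ _))) (norm_nonneg _)
    linarith [hle t ht]

theorem flux_right_neg {P : ℝ → ℝ} (hsol : IsFluxSol a b ρ h g u y)
    (hP : ∀ t ∈ Icc a b, HasDerivWithinAt P (ρ t) (Icc a b) t)
    (hρ : ∀ t ∈ Icc a b, 0 ≤ ρ t) (hρL : ∀ t ∈ Icc a b, |ρ t| ≤ L)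
    (hg : ∀ t ∈ Icc a b, ∀ s, 0 ≤ s → |h t * g s| ≤ L * s) (hua : 0 < u a) {s : ℝ}
    (hs : s ∈ Icc a b) (hus : u s ≤ 0) : y b < 0 := by
  have hP_mono : MonotoneOn P (Icc a b) := monotoneOn_of_hasDerivWithinAt_nonneg (convex_Icc a b)
    (fun t ht ↦ (hP t ht).continuousWithinAt)
    (fun t ht ↦ (hP t (interior_subset ht)).mono interior_subset)
    (fun t ht ↦ hρ t (interior_subset ht))
  have hys : y s < 0 := by
    by_contra! hys
    have has : Icc a s ⊆ Icc a b := Icc_subset_Icc_right hs.2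
    have hle : ∀ t ∈ Icc a s, u s + y s * (P t - P s) ≤ 0 := fun t ht ↦
      add_nonpos hus (mul_nonpos_of_nonneg_of_nonpos hys (sub_nonpos.2 (hP_mono (has ht) hs ht.2)))
    have hua' := (hsol.eq_add_mul_sub_of_nonpos hP hρL hg has (right_mem_Icc.2 hs.1)
      (left_mem_Icc.2 hs.1) hle).1
    exact (hua.trans_eq hua').not_ge (hle a (left_mem_Icc.2 hs.1))
  have hsb : Icc s b ⊆ Icc a b := Icc_subset_Icc_left hs.1
  have hle : ∀ t ∈ Icc s b, u s + y s * (P t - P s) ≤ 0 := fun t ht ↦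
    add_nonpos hus (mul_nonpos_of_nonpos_of_nonneg hys.le (sub_nonneg.2 (hP_mono hs (hsb ht) ht.1)))
  rwa [(hsol.eq_add_mul_sub_of_nonpos hP hρL hg hsb (left_mem_Icc.2 hs.2)
    (right_mem_Icc.2 hs.2) hle).2]

theorem abs_sub_le {D : ℝ} (hsol : IsFluxSol a b ρ h g u y)
    (hρ : ∀ t ∈ Icc a b, |ρ t| ≤ L) (hD : ∀ t ∈ Icc a b, |h t * g (max (u t) 0)| ≤ D) {t : ℝ}
    (ht : t ∈ Icc a b) : |u t - u a| ≤ L * D * (b - a) ^ 2 := by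
  have ha : a ∈ Icc a b := left_mem_Icc.2 (ht.1.trans ht.2)
  have hD₀ : 0 ≤ D := (abs_nonneg _).trans (hD a ha)
  have hL₀ : 0 ≤ L := (abs_nonneg _).trans (hρ a ha)
  have hba : ∀ t ∈ Icc a b, ‖t - a‖ ≤ b - a := fun t ht ↦ by
    rw [Real.norm_of_nonneg (sub_nonneg.2 ht.1)]
    exact sub_le_sub_right ht.2 a
  have hy : ∀ t ∈ Icc a b, |y t| ≤ D * (b - a) := fun t ht ↦ by
    have := (convex_Icc a b).norm_image_sub_le_of_norm_hasDerivWithin_le hsol.hasDeriv_flux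
      (fun t ht ↦ (norm_neg _).trans_le (hD t ht)) ha ht
    rw [hsol.flux_left, sub_zero] at this
    exact this.trans (mul_le_mul_of_nonneg_left (hba t ht) hD₀)
  have hu := (convex_Icc a b).norm_image_sub_le_of_norm_hasDerivWithin_le hsol.hasDeriv_fst
    (C := L * (D * (b - a)))
    (fun t ht ↦ (norm_mul _ _).trans_le (mul_le_mul (hρ t ht) (hy t ht) (norm_nonneg _) hL₀)) ha ht
  calc |u t - u a| ≤ L * (D * (b - a)) * ‖t - a‖ := hu
    _ ≤ L * (D * (b - a)) * (b - a) :=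
      mul_le_mul_of_nonneg_left (hba t ht)
        (mul_nonneg hL₀ ((abs_nonneg _).trans (hy t ht)))
    _ = L * D * (b - a) ^ 2 := by ring

theorem eventually_abs_mul_le (hρ : ∀ t ∈ Icc a b, |ρ t| ≤ L)
    (hg : ∀ t ∈ Icc a b, ∀ s, 0 ≤ s → |h t * g s| ≤ L * s) (hh : ∀ t ∈ Icc a b, |h t| ≤ H)
    (hlim : Tendsto (fun s ↦ g s / s) (𝓝[>] 0) (𝓝 0)) {ε : ℝ} (hε : 0 < ε) :
    ∀ᶠ c in 𝓝[>] 0, ∀ u y, IsFluxSol a b ρ h g u y → u a = c →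
      ∀ t ∈ Icc a b, |h t * g (max (u t) 0)| ≤ ε * c := by
  let e := Real.exp (L * (b - a))
  have hlim' : Tendsto (fun s ↦ H * ‖g s / s‖ * e) (𝓝[>] 0) (𝓝 0) := by
    simpa using (hlim.norm.const_mul H).mul_const e
  obtain ⟨δ, hδ, hgδ⟩ := (nhdsGT_basis (0 : ℝ)).eventually_iff.1 (hlim'.eventually_le_const hε)
  filter_upwards [Ioo_mem_nhdsGT (show 0 < δ / e by positivity)] with c hc u y hsol hua t ht
  have ha : a ∈ Icc a b := left_mem_Icc.2 (ht.1.trans ht.2)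
  have hH : 0 ≤ H := (abs_nonneg _).trans (hh a ha)
  have hu_le : u t ≤ c * e := by
    have hnorm := hsol.norm_le hρ hg ha ht
    rw [hsol.norm_left, hua, abs_of_pos hc.1] at hnorm
    exact (le_abs_self _).trans ((le_max_left _ _).trans hnorm)
  rcases le_or_gt (u t) 0 with hut | hut
  · rw [max_eq_right hut]
    refine (hg t ht 0 le_rfl).trans ?_
    rw [mul_zero]
    exact mul_nonneg hε.le hc.1.le
  · rw [max_eq_left hut.le]
    have hsmall : H * ‖g (u t) / u t‖ * e ≤ ε :=
      hgδ ⟨hut, hu_le.trans_lt ((lt_div_iff₀ (by positivity)).1 hc.2)⟩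
    calc |h t * g (u t)| = |h t| * (‖g (u t) / u t‖ * u t) := by
          rw [abs_mul, norm_div, Real.norm_of_nonneg hut.le, div_mul_cancel₀ _ hut.ne',
            Real.norm_eq_abs]
      _ ≤ H * (‖g (u t) / u t‖ * (c * e)) := by
          gcongr
          exact hh t ht
      _ = H * ‖g (u t) / u t‖ * e * c := by ring
      _ ≤ ε * c := mul_le_mul_of_nonneg_right hsmall hc.1.le

theorem eventually_abs_sub_le (hρ : ∀ t ∈ Icc a b, |ρ t| ≤ L)
    (hg : ∀ t ∈ Icc a b, ∀ s, 0 ≤ s → |h t * g s| ≤ L * s) (hh : ∀ t ∈ Icc a b, |h t| ≤ H)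
    (hlim : Tendsto (fun s ↦ g s / s) (𝓝[>] 0) (𝓝 0)) {η : ℝ} (hη : 0 < η) :
    ∀ᶠ c in 𝓝[>] 0, ∀ u y, IsFluxSol a b ρ h g u y → u a = c →
      ∀ t ∈ Icc a b, |u t - c| ≤ η * c := by
  obtain ⟨ε, hε, hεη⟩ := exists_pos_mul_lt hη (L * (b - a) ^ 2)
  filter_upwards [eventually_abs_mul_le hρ hg hh hlim hε, self_mem_nhdsWithin]
    with c hsmall hc u y hsol hua t ht
  calc |u t - c| ≤ L * (ε * c) * (b - a) ^ 2 := by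
        simpa only [hua] using hsol.abs_sub_le hρ (hsmall u y hsol hua) ht
    _ = L * (b - a) ^ 2 * ε * c := by ring
    _ ≤ η * c := mul_le_mul_of_nonneg_right hεη.le (mem_Ioi.1 hc).le

theorem eventually_abs_comp_sub_le (hρ : ∀ t ∈ Icc a b, |ρ t| ≤ L)
    (hg : ∀ t ∈ Icc a b, ∀ s, 0 ≤ s → |h t * g s| ≤ L * s) (hh : ∀ t ∈ Icc a b, |h t| ≤ H)
    (hlim : Tendsto (fun s ↦ g s / s) (𝓝[>] 0) (𝓝 0)) (hgpos : ∀ s, 0 < s → 0 < g s)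
    (hreg : RegOscAtZero g) {ε : ℝ} (hε : 0 < ε) :
    ∀ᶠ c in 𝓝[>] 0, ∀ u y, IsFluxSol a b ρ h g u y → u a = c →
      ∀ t ∈ Icc a b, |g (max (u t) 0) - g c| ≤ ε * g c := by
  obtain ⟨δ, hδ, η, hη, hosc⟩ := hreg ε hε
  filter_upwards [Ioo_mem_nhdsGT hδ,
    eventually_abs_sub_le hρ hg hh hlim (lt_min (half_pos hη) one_pos)]
    with c ⟨hc, hcδ⟩ hclose u y hsol hua t ht
  have hu := hclose u y hsol hua t ht
  have hu_nonneg : 0 ≤ u t := by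
    have := (abs_le.1 (hu.trans (mul_le_of_le_one_left hc.le (min_le_right _ _)))).1
    linarith
  have hratio : |u t / c - 1| < η := by
    rw [div_sub_one hc.ne', abs_div, abs_of_pos hc, div_lt_iff₀ hc]
    exact hu.trans_lt
      (mul_lt_mul_of_pos_right ((min_le_left _ _).trans_lt (half_lt_self hη)) hc)
  have hgu := hosc c (u t / c) hc hcδ hratio
  have hgc : 0 < g c := hgpos c hc
  rw [div_mul_cancel₀ _ hc.ne', div_sub_one hgc.ne', abs_div, abs_of_pos hgc,
    div_lt_iff₀ hgc] at hgu
  rw [max_eq_left hu_nonneg]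
  exact hgu.le

theorem eventually_flux_right_pos {q : ℝ → ℝ} (hab : a ≤ b) (hρ : ∀ t ∈ Icc a b, |ρ t| ≤ L)
    (hg : ∀ t ∈ Icc a b, ∀ s, 0 ≤ s → |h t * g s| ≤ L * s) (hh : ∀ t ∈ Icc a b, |h t| ≤ H)
    (hlim : Tendsto (fun s ↦ g s / s) (𝓝[>] 0) (𝓝 0)) (hgpos : ∀ s, 0 < s → 0 < g s)
    (hreg : RegOscAtZero g) (hq : ∀ t ∈ Icc a b, HasDerivWithinAt q (h t) (Icc a b) t)
    (hqab : q b < q a) :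
    ∀ᶠ c in 𝓝[>] 0, ∀ u y, IsFluxSol a b ρ h g u y → u a = c → 0 < y b := by
  obtain ⟨ε, hε, hεq⟩ := exists_pos_mul_lt (sub_pos.2 hqab) (H * (b - a))
  filter_upwards [eventually_abs_comp_sub_le hρ hg hh hlim hgpos hreg hε, self_mem_nhdsWithin]
    with c hclose hc u y hsol hua
  have hderiv : ∀ t ∈ Icc a b, HasDerivWithinAt (fun t ↦ y t + q t * g c)
      (-(h t * (g (max (u t) 0) - g c))) (Icc a b) t := fun t ht ↦
    ((hsol.hasDeriv_flux t ht).add ((hq t ht).mul_const (g c))).congr_deriv (by ring)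
  have hdrift : -(H * (ε * g c)) * (b - a) ≤ y b + q b * g c - (y a + q a * g c) :=
    mul_sub_le_sub_of_le_hasDerivWithinAt hab hderiv fun t ht ↦ neg_le_neg <|
      (le_abs_self _).trans <| (abs_mul _ _).trans_le <|
        mul_le_mul (hh t ht) (hclose u y hsol hua t ht) (abs_nonneg _)
          ((abs_nonneg _).trans (hh t ht))
  rw [hsol.flux_left] at hdrift
  nlinarith [mul_lt_mul_of_pos_right hεq (hgpos c hc)]

theorem antitoneOn_flux (hsol : IsFluxSol a b ρ h g u y) {s : Set ℝ}
    (hs : Convex ℝ s) (hsub : s ⊆ Icc a b) (hh : ∀ t ∈ s, 0 ≤ h t)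
    (hg : ∀ t ∈ s, 0 ≤ g (max (u t) 0)) : AntitoneOn y s :=
  antitoneOn_of_hasDerivWithinAt_nonpos hs
    (fun t ht ↦ (hsol.hasDeriv_flux t (hsub ht)).continuousWithinAt.mono hsub)
    (fun t ht ↦ (hsol.hasDeriv_flux t (hsub (interior_subset ht))).mono
      (interior_subset.trans hsub))
    (fun t ht ↦ neg_nonpos.2
      (mul_nonneg (hh t (interior_subset ht)) (hg t (interior_subset ht))))

theorem mul_abs_flux_le (hsol : IsFluxSol a b ρ h g u y) {r d t : ℝ} (hr : 0 ≤ r)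
    (hd : 0 ≤ d) (hsub : Icc (t - d) (t + d) ⊆ Icc a b) (hu : ∀ s ∈ Icc (t - d) (t + d), 0 ≤ u s)
    (hρ : ∀ s ∈ Icc (t - d) (t + d), r ≤ ρ s) (hy : AntitoneOn y (Icc (t - d) (t + d))) :
    r * d * |y t| ≤ u t := by
  have htd : t ∈ Icc (t - d) (t + d) := ⟨by linarith, by linarith⟩
  rcases le_total 0 (y t) with hyt | hyt
  · have hleft : Icc (t - d) t ⊆ Icc (t - d) (t + d) := Icc_subset_Icc_right htd.2
    have hgrow : r * y t * (t - (t - d)) ≤ u t - u (t - d) :=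
      mul_sub_le_sub_of_le_hasDerivWithinAt htd.1
        (fun s hs ↦ (hsol.hasDeriv_fst s (hsub (hleft hs))).mono (hleft.trans hsub)) fun s hs ↦
        mul_le_mul (hρ s (hleft hs)) (hy (hleft hs) htd hs.2) hyt
          (hr.trans (hρ s (hleft hs)))
    rw [abs_of_nonneg hyt]
    linarith [hu (t - d) (left_mem_Icc.2 (htd.1.trans htd.2))]
  · have hright : Icc t (t + d) ⊆ Icc (t - d) (t + d) := Icc_subset_Icc_left htd.1
    have hdecay : u (t + d) - u t ≤ r * y t * (t + d - t) :=
      sub_le_mul_sub_of_hasDerivWithinAt_le htd.2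
        (fun s hs ↦ (hsol.hasDeriv_fst s (hsub (hright hs))).mono (hright.trans hsub)) fun s hs ↦ by
        have hys : y s ≤ y t := hy htd (hright hs) hs.1
        have hrρ : r ≤ ρ s := hρ s (hright hs)
        exact (mul_le_mul_of_nonneg_left hys (hr.trans hrρ)).trans
          (mul_le_mul_of_nonpos_right hrρ hyt)
    rw [abs_of_nonpos hyt]
    linarith [hu (t + d) (right_mem_Icc.2 (htd.1.trans htd.2))]

theorem flux_div_le (hsol : IsFluxSol a b ρ h g u y) {p q l : ℝ} (hpq : p ≤ q)
    (hsub : Icc p q ⊆ Icc a b) (hρ : ∀ t ∈ Icc p q, 0 ≤ ρ t) (hu : ∀ t ∈ Icc p q, 0 < u t)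
    (hl : ∀ t ∈ Icc p q, l * u t ≤ h t * g (u t)) :
    y q / u q ≤ y p / u p - l * (q - p) := by
  -- the Riccati equation `v' = -h g(u) / u - ρ v ^ 2` of the quotient `v = y / u`
  have hriccati : ∀ t ∈ Icc p q, HasDerivWithinAt (fun t ↦ y t / u t)
      (-(h t * g (u t) / u t) - ρ t * (y t / u t) ^ 2) (Icc p q) t := fun t ht ↦ by
    have hut := (hu t ht).ne'
    refine (((hsol.hasDeriv_flux t (hsub ht)).mono hsub).div
      ((hsol.hasDeriv_fst t (hsub ht)).mono hsub) hut).congr_deriv ?_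
    rw [max_eq_left (hu t ht).le]
    field_simp
  have hdecay := sub_le_mul_sub_of_hasDerivWithinAt_le (C := -l) hpq hriccati fun t ht ↦ by
    have hgu : l ≤ h t * g (u t) / u t := (le_div_iff₀ (hu t ht)).2 (hl t ht)
    linarith [mul_nonneg (hρ t ht) (sq_nonneg (y t / u t))]
  linarith

theorem mul_mul_sub_le_two (hsol : IsFluxSol a b ρ h g u y) {p q k l : ℝ}
    (hk : 0 ≤ k) (hpq : p ≤ q) (hsub : Icc p q ⊆ Icc a b) (hρ : ∀ t ∈ Icc p q, 0 ≤ ρ t)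
    (hu : ∀ t ∈ Icc p q, 0 < u t) (hy : ∀ t ∈ Icc p q, k * |y t| ≤ u t)
    (hl : ∀ t ∈ Icc p q, l * u t ≤ h t * g (u t)) : k * l * (q - p) ≤ 2 := by
  have hquot : ∀ t ∈ Icc p q, |k * (y t / u t)| ≤ 1 := fun t ht ↦ by
    rw [mul_div_assoc', abs_div, abs_mul, abs_of_nonneg hk, abs_of_pos (hu t ht),
      div_le_one (hu t ht)]
    exact hy t ht
  have hp := (abs_le.1 (hquot p (left_mem_Icc.2 hpq))).2
  have hq := (abs_le.1 (hquot q (right_mem_Icc.2 hpq))).1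
  linarith [mul_le_mul_of_nonneg_left (hsol.flux_div_le hpq hsub hρ hu hl) hk]

theorem min_mul_abs_left_le (hsol : IsFluxSol a b ρ h g u y)
    (hρ : ∀ t ∈ Icc a b, |ρ t| ≤ L) (hg : ∀ t ∈ Icc a b, ∀ s, 0 ≤ s → |h t * g s| ≤ L * s)
    {k t : ℝ} (hk : 0 ≤ k) (ht : t ∈ Icc a b) (hut : 0 ≤ u t) (hyt : k * |y t| ≤ u t) :
    min k 1 * |u a| ≤ u t * Real.exp (L * (b - a)) := by
  have hnorm := hsol.norm_le hρ hg ht (left_mem_Icc.2 (ht.1.trans ht.2))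
  have hmax : min k 1 * ‖(u t, y t)‖ ≤ u t := by
    rw [Prod.norm_mk, mul_max_of_nonneg _ _ (le_min hk zero_le_one), Real.norm_of_nonneg hut,
      Real.norm_eq_abs]
    exact max_le (mul_le_of_le_one_left hut (min_le_right _ _))
      ((mul_le_mul_of_nonneg_right (min_le_left _ _) (abs_nonneg _)).trans hyt)
  calc min k 1 * |u a| ≤ min k 1 * (‖(u t, y t)‖ * Real.exp (L * (b - a))) := by
        rw [← hsol.norm_left]
        exact mul_le_mul_of_nonneg_left hnorm (le_min hk zero_le_one)
    _ = min k 1 * ‖(u t, y t)‖ * Real.exp (L * (b - a)) := by ring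
    _ ≤ u t * Real.exp (L * (b - a)) := by gcongr

theorem eventually_exists_nonpos (hρ : ∀ t ∈ Icc a b, |ρ t| ≤ L)
    (hg : ∀ t ∈ Icc a b, ∀ s, 0 ≤ s → |h t * g s| ≤ L * s) (hgpos : ∀ s, 0 < s → 0 < g s)
    {m : ℝ} (hm : ∀ᶠ s in atTop, m * s ≤ g s) {x d r κ : ℝ} (hd : 0 < d) (hr : 0 < r)
    (hκ : 0 ≤ κ) (hsub : Icc (x - d) (x + d) ⊆ Icc a b)
    (hρr : ∀ t ∈ Icc (x - d) (x + d), r ≤ ρ t)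
    (hhκ : ∀ t ∈ Icc (x - d) (x + d), κ ≤ h t) (hlarge : 4 < κ * m * d ^ 2 * r) :
    ∀ᶠ c in atTop, ∀ u y, IsFluxSol a b ρ h g u y → u a = c → ∃ t ∈ Icc a b, u t ≤ 0 := by
  obtain ⟨M, hM⟩ := eventually_atTop.1 hm
  have hk : 0 < min (r * (d / 2)) 1 := lt_min (by positivity) one_pos
  have htend : Tendsto (fun c ↦ min (r * (d / 2)) 1 * |c| / Real.exp (L * (b - a))) atTop atTop :=
    (tendsto_abs_atTop_atTop.const_mul_atTop hk).atTop_div_const (Real.exp_pos _)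
  filter_upwards [htend.eventually_ge_atTop M] with c hc u y hsol hua
  by_contra! hu
  have hinner : Icc (x - d / 2) (x + d / 2) ⊆ Icc (x - d) (x + d) :=
    Icc_subset_Icc (by linarith) (by linarith)
  have hy : ∀ t ∈ Icc (x - d / 2) (x + d / 2), r * (d / 2) * |y t| ≤ u t := fun t ht ↦ by
    have htd : Icc (t - d / 2) (t + d / 2) ⊆ Icc (x - d) (x + d) :=
      Icc_subset_Icc (by linarith [ht.1]) (by linarith [ht.2])
    refine hsol.mul_abs_flux_le hr.le (half_pos hd).le (htd.trans hsub)
      (fun s hs ↦ (hu s (hsub (htd hs))).le) (fun s hs ↦ hρr s (htd hs))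
      (hsol.antitoneOn_flux (convex_Icc _ _) (htd.trans hsub)
        (fun s hs ↦ hκ.trans (hhκ s (htd hs))) fun s hs ↦ (hgpos _ ?_).le)
    exact lt_max_of_lt_left (hu s (hsub (htd hs)))
  have hl : ∀ t ∈ Icc (x - d / 2) (x + d / 2), κ * m * u t ≤ h t * g (u t) := fun t ht ↦ by
    have htab := hsub (hinner ht)
    have hM_le : M ≤ u t := hc.trans <| (div_le_iff₀ (Real.exp_pos _)).2 <|
      hua ▸ hsol.min_mul_abs_left_le hρ hg (by positivity) htab (hu t htab).le (hy t ht)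
    rw [mul_assoc]
    exact (mul_le_mul_of_nonneg_left (hM _ hM_le) hκ).trans
      (mul_le_mul_of_nonneg_right (hhκ t (hinner ht)) (hgpos _ (hu t htab)).le)
  have := hsol.mul_mul_sub_le_two (by positivity) (by linarith) (hinner.trans hsub)
    (fun t ht ↦ hr.le.trans (hρr t (hinner ht))) (fun t ht ↦ hu t (hsub (hinner ht))) hy hl
  linarith

end IsFluxSol

theorem exists_hasDerivWithinAt_Icc_sub_eq_integral {f : ℝ → ℝ} {a b : ℝ} (hab : a ≤ b)
    (hf : ContinuousOn f (Icc a b)) :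
    ∃ F : ℝ → ℝ, (∀ t ∈ Icc a b, HasDerivWithinAt F (f t) (Icc a b) t) ∧
      F b - F a = ∫ t in a..b, f t := by
  refine ⟨ODE.picard (fun t _ ↦ f t) a 0 0, fun t ht ↦ ?_, ?_⟩
  · exact ODE.hasDerivWithinAt_picard_Icc (left_mem_Icc.2 hab) (u := univ)
      (f := fun t _ ↦ f t) (hf.comp continuousOn_fst fun _ hp ↦ hp.1) continuousOn_const
      (fun _ _ ↦ mem_univ _) 0 ht
  · rw [ODE.picard_apply₀, ODE.picard_apply, zero_add, sub_zero]

theorem exists_isFluxSol_flux_right_eq_zero {a b L : ℝ} {ρ h g : ℝ → ℝ} (hab : a ≤ b)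
    (hρc : ContinuousOn ρ (Icc a b)) (hhc : ContinuousOn h (Icc a b))
    (hgc : ContinuousOn g (Ici 0)) (hρ : ∀ t ∈ Icc a b, |ρ t| ≤ L)
    (hg : ∀ t ∈ Icc a b, ∀ s, 0 ≤ s → |h t * g s| ≤ L * s) {c₀ c₁ : ℝ}
    (hpos : ∀ u y, IsFluxSol a b ρ h g u y → u a = c₀ → 0 < y b)
    (hneg : ∀ u y, IsFluxSol a b ρ h g u y → u a = c₁ → y b < 0) :
    ∃ u y, IsFluxSol a b ρ h g u y ∧ u a ∈ uIcc c₀ c₁ ∧ y b = 0 := by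
  have hsol : ∀ γ : ℝ → ℝ × ℝ, IsIntegralCurveOn γ (fluxField ρ h g) (Icc a b) → (γ a).2 = 0 →
      IsFluxSol a b ρ h g (fun t ↦ (γ t).1) (fun t ↦ (γ t).2) := fun γ hγ hγa ↦
    ⟨fun t ht ↦ (hγ t ht).fst, fun t ht ↦ (hγ t ht).snd, hγa⟩
  obtain ⟨γ, hγ, hγa, hγb⟩ := exists_isIntegralCurveOn_eq_zero hab
    (continuousOn_uncurry_fluxField hρc hhc hgc)
    (fun t ht z ↦ norm_fluxField_le (hρ t ht) (hg t ht) z) (K := uIcc c₀ c₁ ×ˢ {0})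
    (isCompact_uIcc.prod isCompact_singleton)
    (isPreconnected_uIcc.prod isPreconnected_singleton)
    (mk_mem_prod left_mem_uIcc rfl) (mk_mem_prod right_mem_uIcc rfl) continuous_snd
    (fun γ hγ hγa ↦ hpos _ _ (hsol γ hγ (congrArg Prod.snd hγa)) (congrArg Prod.fst hγa))
    (fun γ hγ hγa ↦ hneg _ _ (hsol γ hγ (congrArg Prod.snd hγa)) (congrArg Prod.fst hγa))
  exact ⟨_, _, hsol γ hγ hγa.2, hγa.1, hγb⟩

theorem exists_pos_isFluxSol {a b : ℝ} {ρ h g : ℝ → ℝ} (hab : a ≤ b)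
    (hρc : ContinuousOn ρ (Icc a b)) (hρ : ∀ t ∈ Icc a b, 0 ≤ ρ t)
    (hhc : ContinuousOn h (Icc a b)) (hint : ∫ t in a..b, h t < 0) (hg1 : CondG1 g)
    (hreg : RegOscAtZero g) (hlim : Tendsto (fun s ↦ g s / s) (𝓝[>] 0) (𝓝 0)) {k : ℝ}
    (hk : ∀ s, 0 ≤ s → g s ≤ k * s) {m : ℝ} (hm : ∀ᶠ s in atTop, m * s ≤ g s) {x d r κ : ℝ}
    (hd : 0 < d) (hr : 0 < r) (hκ : 0 ≤ κ) (hsub : Icc (x - d) (x + d) ⊆ Icc a b)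
    (hρr : ∀ t ∈ Icc (x - d) (x + d), r ≤ ρ t) (hhκ : ∀ t ∈ Icc (x - d) (x + d), κ ≤ h t)
    (hlarge : 4 < κ * m * d ^ 2 * r) :
    ∃ u y, IsFluxSol a b ρ h g u y ∧ (∀ t ∈ Icc a b, 0 < u t) ∧ y b = 0 := by
  obtain ⟨hgc, hg₀, -, hgpos⟩ := hg1
  obtain ⟨P, hP, -⟩ := exists_hasDerivWithinAt_Icc_sub_eq_integral hab hρc
  obtain ⟨q, hq, hqab⟩ := exists_hasDerivWithinAt_Icc_sub_eq_integral hab hhc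
  obtain ⟨R, hR⟩ := isCompact_Icc.exists_bound_of_continuousOn hρc
  obtain ⟨H, hH⟩ := isCompact_Icc.exists_bound_of_continuousOn hhc
  have hρL : ∀ t ∈ Icc a b, |ρ t| ≤ max R (H * k) := fun t ht ↦ (hR t ht).trans (le_max_left _ _)
  have hgL : ∀ t ∈ Icc a b, ∀ s, 0 ≤ s → |h t * g s| ≤ max R (H * k) * s := fun t ht s hs ↦
    calc |h t * g s| ≤ H * (k * s) := by
          rw [abs_mul, abs_of_nonneg (hg₀ s hs)]
          exact mul_le_mul (hH t ht) (hk s hs) (hg₀ s hs) ((norm_nonneg _).trans (hH t ht))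
      _ = H * k * s := by ring
      _ ≤ max R (H * k) * s := mul_le_mul_of_nonneg_right (le_max_right _ _) hs
  have htouch : ∀ u y, IsFluxSol a b ρ h g u y → 0 < u a → (∃ t ∈ Icc a b, u t ≤ 0) → y b < 0 :=
    fun u y hsol hua ⟨t, ht, hut⟩ ↦ hsol.flux_right_neg hP hρ hρL hgL hua ht hut
  obtain ⟨c₀, hsmall, hc₀⟩ := ((IsFluxSol.eventually_flux_right_pos hab hρL hgL hH hlim hgpos
    hreg hq (sub_neg.1 (hqab.trans_lt hint))).and self_mem_nhdsWithin).exists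
  obtain ⟨c₁, hbig, hc₁⟩ := ((IsFluxSol.eventually_exists_nonpos hρL hgL hgpos hm hd hr hκ hsub
    hρr hhκ hlarge).and (eventually_gt_atTop 0)).exists
  obtain ⟨u, y, hsol, hua, hyb⟩ := exists_isFluxSol_flux_right_eq_zero hab hρc hhc hgc hρL hgL
    hsmall fun u y hsol hua ↦ htouch u y hsol (hua ▸ hc₁) (hbig u y hsol hua)
  refine ⟨u, y, hsol, fun t ht ↦ ?_, hyb⟩
  by_contra! hut
  exact (htouch u y hsol ((lt_min hc₀ hc₁).trans_le hua.1) ⟨t, ht, hut⟩).ne hyb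

theorem exists_Icc_subset_half_le {f : ℝ → ℝ} {a b x : ℝ} (hf : ContinuousOn f (Icc a b))
    (hx : x ∈ Ioo a b) (hfx : 0 < f x) :
    ∃ d > 0, Icc (x - d) (x + d) ⊆ Icc a b ∧ ∀ t ∈ Icc (x - d) (x + d), f x / 2 ≤ f t := by
  have hIcc : Icc a b ∈ 𝓝 x := Icc_mem_nhds hx.1 hx.2
  obtain ⟨d, hd, hball⟩ := Metric.nhds_basis_closedBall.mem_iff.1
    (inter_mem hIcc ((hf.continuousAt hIcc).eventually_const_le (half_lt_self hfx)))
  rw [Real.closedBall_eq_Icc] at hball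
  exact ⟨d, hd, fun t ht ↦ (hball ht).1, fun t ht ↦ (hball ht).2⟩

theorem exists_forall_gt_exists_pos_isFluxSol {a b : ℝ} {ρ h g : ℝ → ℝ}
    (hρc : ContinuousOn ρ (Icc a b)) (hρ : ∀ t ∈ Icc a b, 0 < ρ t)
    (hhc : ContinuousOn h (Icc a b)) (hint : ∫ t in a..b, h t < 0) {x : ℝ} (hx : x ∈ Ioo a b)
    (hhx : 0 < h x) (hg1 : CondG1 g) (hreg : RegOscAtZero g)
    (hlim : Tendsto (fun s ↦ g s / s) (𝓝[>] 0) (𝓝 0)) {k : ℝ} (hk : ∀ s, 0 ≤ s → g s ≤ k * s)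
    {m : ℝ} (hm₀ : 0 < m) (hm : ∀ᶠ s in atTop, m * s ≤ g s) :
    ∃ νs > 0, ∀ ν > νs, ∃ u y, IsFluxSol a b ρ (fun t ↦ ν * h t) g u y ∧
      (∀ t ∈ Icc a b, 0 < u t) ∧ y b = 0 := by
  have hab : a ≤ b := (hx.1.trans hx.2).le
  obtain ⟨d, hd, hsub, hhd⟩ := exists_Icc_subset_half_le hhc hx hhx
  obtain ⟨t₀, ht₀, hmin⟩ := isCompact_Icc.exists_isMinOn (nonempty_Icc.2 hab) hρc
  have hρt₀ : 0 < ρ t₀ := hρ t₀ ht₀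
  have hscale : 0 < h x / 2 * m * d ^ 2 * ρ t₀ := by positivity
  refine ⟨4 / (h x / 2 * m * d ^ 2 * ρ t₀), by positivity, fun ν hν ↦ ?_⟩
  have hν₀ : 0 < ν := (div_pos four_pos hscale).trans hν
  have hint' : ∫ t in a..b, ν * h t < 0 := by
    rw [intervalIntegral.integral_const_mul]
    exact mul_neg_of_pos_of_neg hν₀ hint
  refine exists_pos_isFluxSol hab hρc (fun t ht ↦ (hρ t ht).le) (hhc.const_mul ν) hint' hg1 hreg
    hlim hk hm hd hρt₀ (by positivity) hsub (fun t ht ↦ hmin (hsub ht))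
    (fun t ht ↦ mul_le_mul_of_nonneg_left (hhd t ht) hν₀.le) ?_
  calc 4 < ν * (h x / 2 * m * d ^ 2 * ρ t₀) := (div_lt_iff₀ hscale).1 hν
    _ = ν * (h x / 2) * m * d ^ 2 * ρ t₀ := by ring

theorem bddAbove_image_Ioi_of_isBoundedUnder {f : ℝ → ℝ} {a : ℝ} (hf : ContinuousOn f (Ioi a))
    (hleft : IsBoundedUnder (· ≤ ·) (𝓝[>] a) f) (htop : IsBoundedUnder (· ≤ ·) atTop f) :
    BddAbove (f '' Ioi a) := by
  obtain ⟨k₀, hk₀⟩ := hleft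
  obtain ⟨k₁, hk₁⟩ := htop
  obtain ⟨d, hd, hd_sub⟩ := mem_nhdsGT_iff_exists_Ioo_subset.1 (eventually_map.1 hk₀)
  obtain ⟨S, hS⟩ := eventually_atTop.1 (eventually_map.1 hk₁)
  have hcover : Ioi a ⊆ Ioo a d ∪ Icc d S ∪ Ici S := fun s hs ↦ by
    rcases lt_or_ge s d with hsd | hds
    · exact Or.inl (Or.inl ⟨hs, hsd⟩)
    · exact (le_total s S).imp (fun hsS ↦ Or.inr ⟨hds, hsS⟩) id
  refine BddAbove.mono (image_mono hcover) ?_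
  rw [image_union, image_union]
  refine BddAbove.union (BddAbove.union ⟨k₀, forall_mem_image.2 fun s hs ↦ hd_sub hs⟩ ?_)
    ⟨k₁, forall_mem_image.2 hS⟩
  exact isCompact_Icc.bddAbove_image (hf.mono fun s hs ↦ (mem_Ioi.1 hd).trans_le hs.1)

theorem exists_forall_le_mul_of_growthLimsup_lt_top {g : ℝ → ℝ} (hgc : ContinuousOn g (Ici 0))
    (hg₀ : g 0 = 0) (hlim : IsBoundedUnder (· ≤ ·) (𝓝[>] 0) fun s ↦ g s / s)
    (hsup : GrowthLimsup g < ⊤) : ∃ k, ∀ s, 0 ≤ s → g s ≤ k * s := by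
  obtain ⟨c, hc, -⟩ := EReal.lt_iff_exists_real_btwn.1 hsup
  have htop : IsBoundedUnder (· ≤ ·) atTop fun s ↦ g s / s :=
    isBoundedUnder_of_eventually_le
      ((eventually_lt_of_limsup_lt hc).mono fun s hs ↦ (EReal.coe_lt_coe_iff.1 hs).le)
  obtain ⟨k, hk⟩ := bddAbove_image_Ioi_of_isBoundedUnder
    ((hgc.mono Ioi_subset_Ici_self).div continuousOn_id fun s hs ↦ (mem_Ioi.1 hs).ne') hlim htop
  refine ⟨k, fun s hs ↦ ?_⟩
  rcases hs.eq_or_lt with rfl | hs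
  · rw [hg₀, mul_zero]
  · exact (div_le_iff₀ hs).1 (hk (mem_image_of_mem _ hs))

theorem exists_pos_eventually_mul_le_of_growthLiminf_pos {g : ℝ → ℝ} (hinf : 0 < GrowthLiminf g) :
    ∃ m > 0, ∀ᶠ s in atTop, m * s ≤ g s := by
  obtain ⟨m, hm, hm_lt⟩ := EReal.lt_iff_exists_real_btwn.1 hinf
  refine ⟨m, EReal.coe_pos.1 hm, ?_⟩
  filter_upwards [eventually_lt_of_lt_liminf hm_lt, eventually_gt_atTop 0] with s hms hs
  exact (le_div_iff₀ hs).1 (EReal.coe_lt_coe_iff.1 hms).le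

theorem IsFluxSol.radialNeumannPosSol {N : ℕ} (hN : 1 ≤ N) {R₁ R₂ : ℝ} (hR₁ : 0 < R₁)
    {Q g : ℝ → ℝ} (hQ : ContinuousOn Q (Icc R₁ R₂)) (hg : ContinuousOn g (Ici 0)) {u y : ℝ → ℝ}
    (hsol : IsFluxSol R₁ R₂ (fun r ↦ (r ^ (N - 1))⁻¹) (fun r ↦ r ^ (N - 1) * Q r) g u y)
    (hu : ∀ r ∈ Icc R₁ R₂, 0 < u r) (hy : y R₂ = 0) : RadialNeumannPosSol N R₁ R₂ Q g := by
  obtain ⟨n, rfl⟩ := Nat.exists_eq_add_of_le' hN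
  rw [Nat.add_sub_cancel] at hsol
  have hpos : ∀ r ∈ Icc R₁ R₂, 0 < r := fun r hr ↦ hR₁.trans_le hr.1
  have hw' : ∀ r ∈ Icc R₁ R₂, HasDerivWithinAt (fun r ↦ y r / r ^ n)
      (-(n / r * (y r / r ^ n)) - Q r * g (u r)) (Icc R₁ R₂) r := fun r hr ↦ by
    have hr₀ := (hpos r hr).ne'
    convert! (hsol.hasDeriv_flux r hr).div (hasDerivWithinAt_pow n r) (pow_ne_zero n hr₀) using 1
    rw [max_eq_left (hu r hr).le]
    rcases n with _ | n
    · simp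
    · rw [Nat.add_sub_cancel]
      field_simp
      ring
  have hyc : ContinuousOn (fun r ↦ y r / r ^ n) (Icc R₁ R₂) :=
    fun r hr ↦ (hw' r hr).continuousWithinAt
  have huc : ContinuousOn u (Icc R₁ R₂) :=
    fun r hr ↦ (hsol.hasDeriv_fst r hr).continuousWithinAt
  refine ⟨u, fun r ↦ y r / r ^ n, fun r ↦ -(n / r * (y r / r ^ n)) - Q r * g (u r),
    fun r hr ↦ ?_, hw', ?_, hu, fun r _ ↦ ?_, ?_, ?_⟩
  · simpa only [div_eq_inv_mul] using hsol.hasDeriv_fst r hr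
  · exact (((continuousOn_const.div continuousOn_id fun r hr ↦ (hpos r hr).ne').mul hyc).neg).sub
      (hQ.mul (hg.comp huc fun r hr ↦ (hu r hr).le))
  · push_cast
    ring
  · simp only [hsol.flux_left, zero_div]
  · simp only [hy, zero_div]

theorem statement_13_general
    (N : ℕ) (hN : 1 ≤ N) (R₁ R₂ : ℝ) (hR1 : 0 < R₁)
    (Q : ℝ → ℝ) (hQc : ContinuousOn Q (Icc R₁ R₂))
    (hq2 : (∫ r in R₁..R₂, r ^ (N - 1) * Q r) < 0)
    (hq0 : ∃ r₀ ∈ Ioo R₁ R₂, 0 < Q r₀)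
    (g : ℝ → ℝ) (hg1 : CondG1 g) (hreg : RegOscAtZero g)
    (hg0 : Tendsto (fun s => g s / s) (nhdsWithin 0 (Ioi 0)) (nhds 0))
    (hinf : (0 : EReal) < GrowthLiminf g)
    (hsup : GrowthLimsup g < ⊤) :
    ∃ νs : ℝ, 0 < νs ∧ ∀ ν : ℝ, νs < ν →
      RadialNeumannPosSol N R₁ R₂ (fun r => ν * Q r) g := by
  obtain ⟨r₀, hr₀, hQr₀⟩ := hq0
  obtain ⟨k, hk⟩ := exists_forall_le_mul_of_growthLimsup_lt_top hg1.1 hg1.2.2.1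
    hg0.isBoundedUnder_le hsup
  obtain ⟨m, hm₀, hm⟩ := exists_pos_eventually_mul_le_of_growthLiminf_pos hinf
  have hpow : ∀ r ∈ Icc R₁ R₂, 0 < r ^ (N - 1) := fun r hr ↦ pow_pos (hR1.trans_le hr.1) _
  obtain ⟨νs, hνs, hsol⟩ := exists_forall_gt_exists_pos_isFluxSol
    (ρ := fun r ↦ (r ^ (N - 1))⁻¹) (h := fun r ↦ r ^ (N - 1) * Q r)
    ((continuousOn_pow _).inv₀ fun r hr ↦ (hpow r hr).ne') (fun r hr ↦ inv_pos.2 (hpow r hr))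
    ((continuousOn_pow _).mul hQc) hq2 hr₀ (mul_pos (hpow r₀ (Ioo_subset_Icc_self hr₀)) hQr₀) hg1
    hreg hg0 hk hm₀ hm
  refine ⟨νs, hνs, fun ν hν ↦ ?_⟩
  obtain ⟨u, y, huy, hu, hy⟩ := hsol ν hν
  refine IsFluxSol.radialNeumannPosSol hN hR1 (hQc.const_mul ν) hg1.1 ?_ hu hy
  simpa only [mul_left_comm] using huy

/-- Theorem: for `N ≥ 2`, `0 < R₁ < R₂`, a continuous radial weight `Q` with
`∫ r^{N−1} Q(r) dr < 0` and `Q(r₀) > 0` for some `r₀ ∈ (R₁,R₂)`, and `g`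
satisfying (g1), regularly oscillating at zero, with `g(s)/s → 0` as `s → 0⁺`
and `0 < liminf_{s→+∞} g(s)/s ≤ limsup_{s→+∞} g(s)/s < +∞`, the Neumann problem
`−Δu = ν Q(‖x‖) g(u)` on the annulus has a positive radially symmetric solution
for every sufficiently large `ν`. -/
theorem statement_13
    (N : ℕ) (hN : 2 ≤ N) (R₁ R₂ : ℝ) (hR1 : 0 < R₁) (hR12 : R₁ < R₂)
    (Q : ℝ → ℝ) (hQc : ContinuousOn Q (Icc R₁ R₂))
    (hq2 : (∫ r in R₁..R₂, r ^ (N - 1) * Q r) < 0)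
    (hq0 : ∃ r₀ ∈ Ioo R₁ R₂, 0 < Q r₀)
    (g : ℝ → ℝ) (hg1 : CondG1 g) (hreg : RegOscAtZero g)
    (hg0 : Tendsto (fun s => g s / s) (nhdsWithin 0 (Ioi 0)) (nhds 0))
    (hinf : (0 : EReal) < GrowthLiminf g)
    (hsup : GrowthLimsup g < ⊤) :
    ∃ νs : ℝ, 0 < νs ∧ ∀ ν : ℝ, νs < ν →
      RadialNeumannPosSol N R₁ R₂ (fun r => ν * Q r) g :=
  statement_13_general N (one_le_two.trans hN) R₁ R₂ hR1 Q hQc hq2 hq0 g hg1 hreg hg0 hinf hsup
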